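/- Let a be an object, w ∈ Hom(−, a), and J = I_L(w) the set of indices i with σ_i^a ≤_R w in the weak order. Then w_J ≤_R w, where w_J is the longest element of Hom(−,a) ∩ W_J(C). -/

import Mathlib

/-!
The proof compares inversion sets. The inversions of a morphism `w` with target `a` are the
positive roots `α` at `a` with `w⁻¹ α ≤ 0`.

If `σ_i ≤_R w`, then `α_i` is an inversion of `w` (`inv_simpleRoot_nonpos`), hence so is every
positive root in the span of the `α_i` with `i ∈ J = I_L(w)`. An element `m` of `W_J` changes only
the coordinates in `J` (`parabolic_lin`), so all inversions of `m` lie in that span and are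
inversions of `w`. Inclusion of inversion sets gives `m ≤_R w` (`weakLe_of_inversions`). Of `w_J`
only the membership in `W_J` matters.

The last step rests on the equality of the length of `x` with its number `ht x` of inversions
(`len_eq_ht`); `ht x` is counted at the source of `x`, as the number of positive roots `β` with
`x β ≤ 0`. Multiplying with a simple reflection on the right changes `ht` by one, so `ht ≤ len`.
For the converse, let `x` descend to `x σ_i` when `x α_i ≤ 0`; then `ht` drops by one. Every
morphism descends to an identity (`reaches_id`). This is proved as in Newman's lemma, from the local
confluence of descending (`local_confluence`): given two descents `x σ_i` and `x σ_j`, both ways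
around the rank two residue of `x` are descending until they meet opposite to `x`. That the two
ways meet means that the product of the alternating word of length `2m` is an identity, where `m` is
the number of positive roots in the span of `α_i` and `α_j` (`path_loop_idMor`). Condition (R4) provides
the equality of source and target. The product has height zero and its `2 × 2` minor is one, so
sign-coherence of roots forces it to act as the identity (`lin_eq_self`).
-/

set_option linter.unusedSectionVars false

/-- A Cartan scheme `C = C(I, A, (ρ_i), (C^a))`. -/
structure CartanScheme (I A : Type) [Fintype I] [DecidableEq I] [Fintype A] [Nonempty A] where
  ρ : I → A → A
  c : A → I → I → ℤ
  ρ_invol : ∀ i a, ρ i (ρ i a) = a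
  c_diag : ∀ a i, c a i i = 2
  c_offdiag_nonpos : ∀ a i j, i ≠ j → c a i j ≤ 0
  c_zero_symm : ∀ a i j, c a i j = 0 → c a j i = 0
  c_rho : ∀ a i j, c (ρ i a) i j = c a i j

namespace CartanScheme

variable {I A : Type} [Fintype I] [DecidableEq I] [Fintype A] [Nonempty A] [DecidableEq A]
variable (C : CartanScheme I A)

/-- The simple reflection `σ_i^a` as a map `ℤ^I → ℤ^I`, `σ_i^a(α_j) = α_j - c^a_{ij} α_i`. -/
def sigma (a : A) (i : I) : (I → ℤ) → (I → ℤ) :=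
  fun v k => v k - (if k = i then ∑ j, C.c a i j * v j else 0)

/-- Target object of the word `[i_1, …, i_k]` read at source object `a`:
`ρ_{i_1} ⋯ ρ_{i_k}(a)`. -/
def wordTarget (a : A) : List I → A
  | [] => a
  | i :: l => C.ρ i (wordTarget a l)

/-- The map `σ_{i_1} ⋯ σ_{i_k}^a : ℤ^I → ℤ^I` determined by a word with source `a`. -/
def wordMap (a : A) : List I → ((I → ℤ) → (I → ℤ))
  | [] => id
  | i :: l => C.sigma (C.wordTarget a l) i ∘ wordMap a l

theorem wordTarget_append (a : A) (l₁ l₂ : List I) :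
    C.wordTarget a (l₁ ++ l₂) = C.wordTarget (C.wordTarget a l₂) l₁ := by
  induction l₁ with
  | nil => rfl
  | cons i l ih => simp [wordTarget, ih]

theorem wordMap_append (a : A) (l₁ l₂ : List I) :
    C.wordMap a (l₁ ++ l₂) = C.wordMap (C.wordTarget a l₂) l₁ ∘ C.wordMap a l₂ := by
  induction l₁ with
  | nil => rfl
  | cons i l ih => simp [wordMap, ih, wordTarget_append, Function.comp_assoc]

/-- A morphism of the Weyl groupoid `W(C)`: a source object, a target object, and a map
`ℤ^I → ℤ^I` which is a composition of simple reflections along some word. -/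
@[ext]
structure Mor where
  src : A
  tgt : A
  toFun : (I → ℤ) → (I → ℤ)
  spec : ∃ l : List I, C.wordTarget src l = tgt ∧ C.wordMap src l = toFun

variable {C}

/-- A word realizes a morphism. -/
def Realizes (w : Mor C) (l : List I) : Prop :=
  C.wordTarget w.src l = w.tgt ∧ C.wordMap w.src l = w.toFun

variable (C)

/-- The identity morphism `id^a`. -/
def idMor (a : A) : Mor C := ⟨a, a, id, ⟨[], rfl, rfl⟩⟩

/-- The generator `σ_i^a ∈ Hom(a, ρ_i(a))`. -/
def genMor (i : I) (a : A) : Mor C :=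
  ⟨a, C.ρ i a, C.sigma a i, ⟨[i], rfl, Function.comp_id _⟩⟩

/-- The simple reflection with target `a`, i.e. `id^a σ_i = σ_i^{ρ_i(a)} ∈ Hom(ρ_i(a), a)`. -/
def sgen (a : A) (i : I) : Mor C :=
  { src := C.ρ i a, tgt := a, toFun := C.sigma (C.ρ i a) i,
    spec := ⟨[i], by simp [wordTarget, C.ρ_invol], Function.comp_id _⟩ }

variable {C}

/-- Composition `u ∘ v` (with `v` applied first); junk value `u` if not composable. -/
def Mor.comp (u v : Mor C) : Mor C :=
  if h : v.tgt = u.src then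
    { src := v.src, tgt := u.tgt, toFun := u.toFun ∘ v.toFun,
      spec := by
        obtain ⟨lu, hu1, hu2⟩ := u.spec
        obtain ⟨lv, hv1, hv2⟩ := v.spec
        refine ⟨lu ++ lv, ?_, ?_⟩
        · rw [C.wordTarget_append, hv1, h, hu1]
        · rw [C.wordMap_append, hv1, h, hu2, hv2] }
  else u

/-- Length of a morphism: minimal length of a realizing word. -/
noncomputable def len (w : Mor C) : ℕ := sInf {k | ∃ l : List I, Realizes w l ∧ l.length = k}

/-- A reduced decomposition. -/
def IsReduced (w : Mor C) (l : List I) : Prop := Realizes w l ∧ l.length = len w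

/-- The (right) weak order: `u ≤_R uv` iff `ℓ(uv) = ℓ(u) + ℓ(v)`. -/
def weakLe (u w : Mor C) : Prop :=
  ∃ v : Mor C, v.tgt = u.src ∧ w = u.comp v ∧ len w = len u + len v

/-- Membership in the parabolic subgroupoid `W_J(C)`. -/
def InParabolic (J : Set I) (w : Mor C) : Prop :=
  ∃ l : List I, (∀ i ∈ l, i ∈ J) ∧ Realizes w l

/-- Length with respect to the generators `σ_j`, `j ∈ J`. -/
noncomputable def lenPar (J : Set I) (w : Mor C) : ℕ :=
  sInf {k | ∃ l : List I, (∀ i ∈ l, i ∈ J) ∧ Realizes w l ∧ l.length = k}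

/-- The set of letters occurring in some reduced decomposition of `w`;
by the theorem on reduced decompositions this is the set `J(w)`. -/
def Jset (w : Mor C) : Set I := {i | ∃ l : List I, IsReduced w l ∧ i ∈ l}

variable (C)

/-- The set of real roots at the object `a`. -/
def roots (a : A) : Set (I → ℤ) :=
  {α | ∃ (b : A) (l : List I) (j : I),
    C.wordTarget b l = a ∧ α = C.wordMap b l (Pi.single j 1)}

/-- The set of positive (real) roots at `a`. -/
def posRoots (a : A) : Set (I → ℤ) := {α ∈ C.roots a | ∀ i, 0 ≤ α i}

/-- `R^re(C)` is a finite root system of type `C`: axioms (R1), (R2), (R4) and finiteness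
((R3) holds automatically for real roots). -/
def IsFRS : Prop :=
  (∀ a : A, (C.roots a).Finite) ∧
  (∀ (a : A) (α : I → ℤ), α ∈ C.roots a → (∀ i, 0 ≤ α i) ∨ (∀ i, α i ≤ 0)) ∧
  (∀ (a : A) (i : I) (α : I → ℤ), α ∈ C.roots a → (∃ z : ℤ, α = z • Pi.single i 1) →
    α = Pi.single i 1 ∨ α = -Pi.single i 1) ∧
  (∀ (a : A) (i j : I), i ≠ j →
    (fun x => C.ρ i (C.ρ j x))^[(C.roots a ∩
      {α | ∃ m n : ℕ, α = (m : ℤ) • Pi.single i 1 + (n : ℤ) • Pi.single j 1}).ncard] a = a)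

variable {C}

/-- `I_L(w)`: the set of simple reflections with target `w.tgt` below `w` in weak order. -/
def IL (w : Mor C) : Set I := {i | weakLe (sgen C w.tgt i) w}

/-- `m` is the longest element of `Hom(-,a) ∩ W_J(C)`, i.e. `w_J` at the object `a`. -/
def IsLongestPar (a : A) (J : Set I) (m : Mor C) : Prop :=
  m.tgt = a ∧ InParabolic J m ∧
    ∀ x : Mor C, x.tgt = a → InParabolic J x → weakLe x m

/-- `m` is the longest element `w_I` of `Hom(-,a)`. -/
def IsLongestAt (a : A) (m : Mor C) : Prop :=
  m.tgt = a ∧ ∀ x : Mor C, x.tgt = a → weakLe x m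

/-- `z` is the meet of `x` and `y` in `(Hom(-,a), ≤_R)`. -/
def IsMeet (a : A) (x y z : Mor C) : Prop :=
  z.tgt = a ∧ weakLe z x ∧ weakLe z y ∧
    ∀ t : Mor C, t.tgt = a → weakLe t x → weakLe t y → weakLe t z

/-- `z` is the join of `x` and `y` in `(Hom(-,a), ≤_R)`. -/
def IsJoin (a : A) (x y z : Mor C) : Prop :=
  z.tgt = a ∧ weakLe x z ∧ weakLe y z ∧
    ∀ t : Mor C, t.tgt = a → weakLe x t → weakLe y t → weakLe z t

/-- The left coset `u W_J(C) ⊆ Hom(-, u.tgt)`. -/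
def leftCoset (u : Mor C) (J : Set I) : Set (Mor C) :=
  {x | ∃ v : Mor C, InParabolic J v ∧ v.tgt = u.src ∧ x = u.comp v}

end CartanScheme

variable {I A : Type} [Fintype I] [DecidableEq I] [Fintype A] [Nonempty A] [DecidableEq A]

open CartanScheme


namespace CartanScheme

variable {C : CartanScheme I A}

/-! ### Simple reflections and the linear action of morphisms -/

/-- The simple root `α_i`. -/
def simpleRoot (i : I) : I → ℤ := Pi.single i 1

theorem simpleRoot_self (i : I) : simpleRoot i i = 1 := by simp [simpleRoot]

theorem simpleRoot_ne {i k : I} (h : k ≠ i) : simpleRoot i k = 0 := by simp [simpleRoot, h]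

theorem simpleRoot_nonneg (i : I) : 0 ≤ simpleRoot i := by
  intro k
  by_cases h : k = i
  · subst h; simp [simpleRoot]
  · simp [simpleRoot, h]

theorem sigma_eq (a : A) (i : I) (v : I → ℤ) :
    C.sigma a i v = v - (∑ j, C.c a i j * v j) • simpleRoot i := by
  ext k
  by_cases h : k = i
  · subst h; simp [sigma, simpleRoot]
  · simp [sigma, simpleRoot, h]

theorem sigma_apply_ne (a : A) {i k : I} (h : k ≠ i) (v : I → ℤ) : C.sigma a i v k = v k := by
  simp [sigma, h]

theorem sigma_add (a : A) (i : I) (v w : I → ℤ) :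
    C.sigma a i (v + w) = C.sigma a i v + C.sigma a i w := by
  simp only [sigma_eq, Pi.add_apply, mul_add, Finset.sum_add_distrib, add_smul]
  abel

theorem sigma_smul (a : A) (i : I) (n : ℤ) (v : I → ℤ) :
    C.sigma a i (n • v) = n • C.sigma a i v := by
  have : ∑ j, C.c a i j * (n • v) j = n * ∑ j, C.c a i j * v j := by
    rw [Finset.mul_sum]
    exact Finset.sum_congr rfl fun j _ => by simp only [Pi.smul_apply, smul_eq_mul]; ring
  rw [sigma_eq, sigma_eq, this, smul_sub, mul_smul]

theorem sigma_rho (a : A) (i : I) : C.sigma (C.ρ i a) i = C.sigma a i := by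
  funext v
  simp only [sigma_eq, C.c_rho]

theorem sigma_simpleRoot (a : A) (i j : I) :
    C.sigma a i (simpleRoot j) = simpleRoot j - C.c a i j • simpleRoot i := by
  rw [sigma_eq]
  simp [simpleRoot, Pi.single_apply]

theorem sigma_simpleRoot_self (a : A) (i : I) :
    C.sigma a i (simpleRoot i) = -simpleRoot i := by
  rw [sigma_simpleRoot, C.c_diag, two_smul]
  abel

/-- The simple reflection `σ_i^a` as a linear map. -/
def sigmaLin (C : CartanScheme I A) (a : A) (i : I) : (I → ℤ) →ₗ[ℤ] (I → ℤ) where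
  toFun := C.sigma a i
  map_add' := sigma_add a i
  map_smul' := sigma_smul a i

theorem sigma_sigma (a : A) (i : I) (v : I → ℤ) : C.sigma a i (C.sigma a i v) = v := by
  conv_lhs => rw [sigma_eq a i v, sub_eq_add_neg, ← neg_smul, sigma_add, sigma_smul,
    sigma_simpleRoot_self, sigma_eq a i v]
  simp

theorem exists_lin (w : Mor C) : ∃ f : (I → ℤ) →ₗ[ℤ] (I → ℤ), ∀ v, f v = w.toFun v := by
  obtain ⟨l, -, h2⟩ := w.spec
  rw [← h2]
  generalize w.src = b
  clear h2
  induction l with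
  | nil => exact ⟨LinearMap.id, fun v => rfl⟩
  | cons i l ih =>
    obtain ⟨f, hf⟩ := ih
    exact ⟨(sigmaLin C (C.wordTarget b l) i).comp f, fun v => by
      simp [wordMap, sigmaLin, hf]⟩

/-- The linear map `ℤ^I → ℤ^I` underlying a morphism. -/
noncomputable def Mor.lin (w : Mor C) : (I → ℤ) →ₗ[ℤ] (I → ℤ) := (exists_lin w).choose

theorem Mor.lin_apply (w : Mor C) (v : I → ℤ) : w.lin v = w.toFun v :=
  (exists_lin w).choose_spec v

theorem Mor.ext_lin {x y : Mor C} (h1 : x.src = y.src) (h2 : x.tgt = y.tgt)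
    (h3 : ∀ v, x.lin v = y.lin v) : x = y :=
  Mor.ext h1 h2 (funext fun v => by rw [← x.lin_apply, ← y.lin_apply, h3])

theorem wordTarget_reverse (a : A) (l : List I) :
    C.wordTarget (C.wordTarget a l) l.reverse = a := by
  induction l with
  | nil => rfl
  | cons i l ih => simp [wordTarget, wordTarget_append, C.ρ_invol, ih]

theorem wordMap_reverse (a : A) (l : List I) (v : I → ℤ) :
    C.wordMap (C.wordTarget a l) l.reverse (C.wordMap a l v) = v := by
  induction l with
  | nil => rfl
  | cons i l ih =>
    simp [wordTarget, wordMap, wordMap_append, C.ρ_invol, sigma_rho, sigma_sigma, ih]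

theorem exists_inv (w : Mor C) : ∃ v : Mor C, v.src = w.tgt ∧ v.tgt = w.src ∧
    (∀ x, v.lin (w.lin x) = x) ∧ ∀ x, w.lin (v.lin x) = x := by
  obtain ⟨l, h1, h2⟩ := w.spec
  refine ⟨⟨w.tgt, w.src, C.wordMap w.tgt l.reverse, l.reverse, ?_, rfl⟩, rfl, rfl, ?_, ?_⟩
  · rw [← h1, wordTarget_reverse]
  · intro x
    rw [Mor.lin_apply, Mor.lin_apply, ← h2]
    have := wordMap_reverse (C := C) w.src l x
    rwa [h1] at this
  · intro x
    rw [Mor.lin_apply, Mor.lin_apply, ← h2]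
    have := wordMap_reverse (C := C) w.tgt l.reverse x
    rwa [List.reverse_reverse, ← h1, wordTarget_reverse, h1] at this

/-- The inverse morphism. -/
noncomputable def Mor.inv (w : Mor C) : Mor C := (exists_inv w).choose

theorem Mor.inv_src (w : Mor C) : w.inv.src = w.tgt := (exists_inv w).choose_spec.1

theorem Mor.inv_tgt (w : Mor C) : w.inv.tgt = w.src := (exists_inv w).choose_spec.2.1

theorem Mor.inv_lin (w : Mor C) (x : I → ℤ) : w.inv.lin (w.lin x) = x :=
  (exists_inv w).choose_spec.2.2.1 x

theorem Mor.lin_inv (w : Mor C) (x : I → ℤ) : w.lin (w.inv.lin x) = x :=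
  (exists_inv w).choose_spec.2.2.2 x

theorem Mor.lin_injective (w : Mor C) : Function.Injective w.lin :=
  Function.LeftInverse.injective w.inv_lin

theorem comp_src {u v : Mor C} (h : v.tgt = u.src) : (u.comp v).src = v.src := by
  simp [Mor.comp, h]

theorem comp_tgt {u v : Mor C} (h : v.tgt = u.src) : (u.comp v).tgt = u.tgt := by
  simp [Mor.comp, h]

theorem comp_lin {u v : Mor C} (h : v.tgt = u.src) (x : I → ℤ) :
    (u.comp v).lin x = u.lin (v.lin x) := by
  simp [Mor.lin_apply, Mor.comp, h]

theorem idMor_lin (a : A) (x : I → ℤ) : (idMor C a).lin x = x := by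
  simp [Mor.lin_apply, idMor]

theorem sgen_lin (a : A) (i : I) (x : I → ℤ) : (sgen C a i).lin x = C.sigma a i x := by
  simp [Mor.lin_apply, sgen, sigma_rho]

/-- The product `x σ_i` of a morphism with the simple reflection whose target is the
source of `x`. -/
def rmul (x : Mor C) (i : I) : Mor C where
  src := C.ρ i x.src
  tgt := x.tgt
  toFun := x.toFun ∘ C.sigma x.src i
  spec := by
    obtain ⟨l, h1, h2⟩ := x.spec
    refine ⟨l ++ [i], ?_, ?_⟩
    · simp [wordTarget_append, wordTarget, C.ρ_invol, h1]
    · simp [wordMap_append, wordTarget, wordMap, C.ρ_invol, h2, sigma_rho]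

theorem rmul_src (x : Mor C) (i : I) : (rmul x i).src = C.ρ i x.src := rfl

theorem rmul_tgt (x : Mor C) (i : I) : (rmul x i).tgt = x.tgt := rfl

theorem rmul_lin (x : Mor C) (i : I) (v : I → ℤ) :
    (rmul x i).lin v = x.lin (C.sigma x.src i v) := by
  simp [Mor.lin_apply, rmul]

theorem rmul_rmul (x : Mor C) (i : I) : rmul (rmul x i) i = x :=
  Mor.ext_lin (C.ρ_invol i _) rfl fun v => by
    simp [rmul_lin, rmul_src, sigma_rho, sigma_sigma]

theorem rmul_lin_self (x : Mor C) (i : I) :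
    (rmul x i).lin (simpleRoot i) = -x.lin (simpleRoot i) := by
  rw [rmul_lin, sigma_simpleRoot_self, map_neg]

theorem realizes_rmul {x : Mor C} {l : List I} (h : Realizes x l) (i : I) :
    Realizes (rmul x i) (l ++ [i]) := by
  obtain ⟨h1, h2⟩ := h
  refine ⟨?_, ?_⟩
  · simp [rmul, wordTarget_append, wordTarget, C.ρ_invol, h1]
  · simp [rmul, wordMap_append, wordTarget, wordMap, C.ρ_invol, h2, sigma_rho]

/-- Every morphism is obtained from an identity by multiplying with simple reflections on
the right, one for each letter of a given word. -/
theorem realizes_induction {P : Mor C → List I → Prop} (h0 : ∀ a, P (idMor C a) [])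
    (h1 : ∀ x l i, P x l → P (rmul x i) (l ++ [i])) :
    ∀ (l : List I) (x : Mor C), Realizes x l → P x l := by
  intro l
  induction l using List.reverseRecOn with
  | nil =>
    rintro x ⟨hx1, hx2⟩
    have : x = idMor C x.tgt := Mor.ext hx1 rfl hx2.symm
    rw [this]
    exact h0 _
  | append_singleton l i ih =>
    rintro x ⟨hx1, hx2⟩
    have hy : Realizes (rmul x i) l := by
      refine ⟨?_, ?_⟩
      · rw [wordTarget_append] at hx1
        exact hx1
      · funext v
        have := congrFun hx2 (C.sigma x.src i v)
        rw [wordMap_append] at this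
        simp only [wordTarget, wordMap, Function.comp_apply, sigma_sigma, id_eq] at this
        exact this
    have := h1 _ _ i (ih _ hy)
    rwa [rmul_rmul] at this

/-! ### Length -/

theorem exists_reduced (w : Mor C) : ∃ l, IsReduced w l := by
  have hne : {k | ∃ l : List I, Realizes w l ∧ l.length = k}.Nonempty := by
    obtain ⟨l, hl⟩ := w.spec
    exact ⟨l.length, l, hl, rfl⟩
  exact Nat.sInf_mem hne

theorem len_le_length {w : Mor C} {l : List I} (h : Realizes w l) : len w ≤ l.length :=
  Nat.sInf_le ⟨l, h, rfl⟩

theorem len_idMor (a : A) : len (idMor C a) = 0 :=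
  Nat.le_zero.mp (len_le_length (l := []) ⟨rfl, rfl⟩)

theorem len_rmul_le (x : Mor C) (i : I) : len (rmul x i) ≤ len x + 1 := by
  obtain ⟨l, hl, hlen⟩ := exists_reduced x
  have := len_le_length (realizes_rmul hl i)
  rw [← hlen]
  simpa using this

/-! ### Roots and heights -/

theorem lin_mem_roots (w : Mor C) {α : I → ℤ} (h : α ∈ C.roots w.src) :
    w.lin α ∈ C.roots w.tgt := by
  obtain ⟨b, l, j, hl, rfl⟩ := h
  obtain ⟨l', h1, h2⟩ := w.spec
  refine ⟨b, l' ++ l, j, ?_, ?_⟩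
  · rw [wordTarget_append, hl, h1]
  · rw [wordMap_append, hl, h2, Mor.lin_apply, Function.comp_apply]

theorem inv_mem_roots (w : Mor C) {α : I → ℤ} (h : α ∈ C.roots w.tgt) :
    w.inv.lin α ∈ C.roots w.src := by
  rw [← w.inv_tgt]
  exact lin_mem_roots _ (w.inv_src ▸ h)

theorem simpleRoot_mem (C : CartanScheme I A) (a : A) (i : I) : simpleRoot i ∈ C.roots a := ⟨a, [], i, rfl, rfl⟩

theorem sigma_mem_roots {a : A} {i : I} {α : I → ℤ} (h : α ∈ C.roots a) :
    C.sigma a i α ∈ C.roots (C.ρ i a) := by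
  have := lin_mem_roots (genMor C i a) h
  rwa [Mor.lin_apply] at this

theorem sigma_mem_roots' {a : A} {i : I} {α : I → ℤ} (h : α ∈ C.roots (C.ρ i a)) :
    C.sigma a i α ∈ C.roots a := by
  have := sigma_mem_roots (i := i) h
  rwa [sigma_rho, C.ρ_invol] at this

theorem exists_root_eq {a : A} {α : I → ℤ} (h : α ∈ C.roots a) :
    ∃ (w : Mor C) (j : I), w.tgt = a ∧ α = w.lin (simpleRoot j) := by
  obtain ⟨b, l, j, hl, rfl⟩ := h
  exact ⟨⟨b, a, C.wordMap b l, l, hl, rfl⟩, j, rfl, by rw [Mor.lin_apply]; rfl⟩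

theorem neg_mem_roots {a : A} {α : I → ℤ} (h : α ∈ C.roots a) : -α ∈ C.roots a := by
  obtain ⟨w, j, rfl, rfl⟩ := exists_root_eq h
  rw [← rmul_lin_self]
  exact lin_mem_roots (rmul w j) (simpleRoot_mem _ _ _)

theorem root_ne_zero {a : A} {α : I → ℤ} (h : α ∈ C.roots a) : α ≠ 0 := by
  obtain ⟨w, j, rfl, rfl⟩ := exists_root_eq h
  intro h0
  have := w.lin_injective (h0.trans (map_zero w.lin).symm)
  have := congrFun this j
  simp [simpleRoot] at this

theorem root_not_nonpos {a : A} {α : I → ℤ} (h : α ∈ C.roots a) (h0 : 0 ≤ α) : ¬ α ≤ 0 :=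
  fun h1 => root_ne_zero h (le_antisymm h1 h0)

theorem root_sign (hC : C.IsFRS) {a : A} {α : I → ℤ} (h : α ∈ C.roots a) :
    0 ≤ α ∨ α ≤ 0 := hC.2.1 a α h

/-- A positive root supported in `{i}` is `α_i`. -/
theorem eq_simpleRoot (hC : C.IsFRS) {a : A} {i : I} {α : I → ℤ} (h : α ∈ C.roots a)
    (h0 : 0 ≤ α) (hs : ∀ k, k ≠ i → α k = 0) : α = simpleRoot i := by
  have hα : α = α i • Pi.single i 1 := by
    ext k
    by_cases hk : k = i
    · subst hk; simp
    · simp [hk, hs k hk]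
  rcases hC.2.2.1 a i α h ⟨_, hα⟩ with h1 | h1
  · exact h1
  · have := h0 i
    rw [h1] at this
    simp at this

/-- `σ_i` permutes the positive roots different from `α_i`. -/
theorem sigma_nonneg (hC : C.IsFRS) {a : A} {i : I} {α : I → ℤ} (h : α ∈ C.roots a)
    (h0 : 0 ≤ α) (hne : α ≠ simpleRoot i) : 0 ≤ C.sigma a i α := by
  refine (root_sign hC (sigma_mem_roots h)).resolve_right fun h1 => hne ?_
  refine eq_simpleRoot hC h h0 fun k hk => le_antisymm ?_ (h0 k)
  have := h1 k
  rwa [sigma_apply_ne a hk] at this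

/-- The positive roots at the source of `x` that `x` makes negative. -/
def Dset (x : Mor C) : Set (I → ℤ) := {β | β ∈ C.roots x.src ∧ 0 ≤ β ∧ x.lin β ≤ 0}

/-- The height of `x`: its number of inversions. -/
noncomputable def ht (x : Mor C) : ℕ := (Dset x).ncard

theorem Dset_finite (hC : C.IsFRS) (x : Mor C) : (Dset x).Finite :=
  (hC.1 x.src).subset fun _ h => h.1

theorem Dset_idMor (a : A) : Dset (idMor C a) = ∅ := by
  ext β
  simp only [Set.mem_empty_iff_false, iff_false]
  rintro ⟨h1, h2, h3⟩
  rw [idMor_lin] at h3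
  exact root_not_nonpos h1 h2 h3

theorem ht_idMor (a : A) : ht (idMor C a) = 0 := by
  rw [ht, Dset_idMor, Set.ncard_empty]

theorem ht_rmul_of_nonneg (hC : C.IsFRS) (x : Mor C) (i : I)
    (hx : 0 ≤ x.lin (simpleRoot i)) : ht (rmul x i) = ht x + 1 := by
  have hD : Dset (rmul x i) = insert (simpleRoot i) (C.sigma x.src i '' Dset x) := by
    ext β
    constructor
    · rintro ⟨h1, h2, h3⟩
      by_cases hβ : β = simpleRoot i
      · exact Or.inl hβ
      · refine Or.inr ⟨C.sigma x.src i β, ⟨sigma_mem_roots' h1, ?_, ?_⟩, sigma_sigma _ _ _⟩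
        · have := sigma_nonneg hC h1 h2 hβ
          rwa [rmul_src, sigma_rho] at this
        · rwa [rmul_lin] at h3
    · rintro (rfl | ⟨β, ⟨h1, h2, h3⟩, rfl⟩)
      · refine ⟨simpleRoot_mem _ _ _, simpleRoot_nonneg _, ?_⟩
        rw [rmul_lin_self]
        exact neg_nonpos.mpr hx
      · refine ⟨sigma_mem_roots h1, sigma_nonneg hC h1 h2 ?_, ?_⟩
        · rintro rfl
          exact root_not_nonpos (lin_mem_roots x h1) hx h3
        · rwa [rmul_lin, sigma_sigma]
  rw [ht, hD, Set.ncard_insert_of_notMem ?_ ((Dset_finite hC x).image _),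
    Set.ncard_image_of_injective, ht]
  · exact Function.LeftInverse.injective (sigma_sigma x.src i)
  · rintro ⟨β, ⟨h1, h2, h3⟩, h4⟩
    have : β = -simpleRoot i := by rw [← sigma_simpleRoot_self x.src i, ← h4, sigma_sigma]
    have := h2 i
    simp_all [simpleRoot]

theorem ht_rmul_of_nonpos (hC : C.IsFRS) (x : Mor C) (i : I)
    (hx : x.lin (simpleRoot i) ≤ 0) : ht (rmul x i) + 1 = ht x := by
  have := ht_rmul_of_nonneg hC (rmul x i) i (by rw [rmul_lin_self]; exact neg_nonneg.mpr hx)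
  rw [rmul_rmul] at this
  exact this.symm

theorem lin_simpleRoot_sign (hC : C.IsFRS) (x : Mor C) (i : I) :
    0 ≤ x.lin (simpleRoot i) ∨ x.lin (simpleRoot i) ≤ 0 :=
  root_sign hC (lin_mem_roots x (simpleRoot_mem _ _ _))

theorem ht_le_len (hC : C.IsFRS) (x : Mor C) : ht x ≤ len x := by
  obtain ⟨l, hl, hlen⟩ := exists_reduced x
  rw [← hlen]
  refine realizes_induction (P := fun x l => ht x ≤ l.length) (fun a => ?_)
    (fun x l i h => ?_) l x hl
  · simp [ht_idMor]
  · rw [List.length_append, List.length_singleton]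
    rcases lin_simpleRoot_sign hC x i with h1 | h1
    · rw [ht_rmul_of_nonneg hC x i h1]; omega
    · have := ht_rmul_of_nonpos hC x i h1
      omega

theorem lin_eq_sum (x : Mor C) (γ : I → ℤ) :
    x.lin γ = ∑ k, γ k • x.lin (simpleRoot k) := by
  conv_lhs => rw [← Finset.univ_sum_single γ, map_sum]
  refine Finset.sum_congr rfl fun k _ => ?_
  rw [← map_smul]
  congr 1
  ext t
  by_cases h : t = k
  · subst h; simp [simpleRoot]
  · simp [simpleRoot, h]

theorem lin_nonpos (x : Mor C) {γ : I → ℤ} (h0 : 0 ≤ γ)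
    (h : ∀ k, γ k = 0 ∨ x.lin (simpleRoot k) ≤ 0) : x.lin γ ≤ 0 := by
  rw [lin_eq_sum]
  refine Finset.sum_nonpos fun k _ => ?_
  rcases h k with h1 | h1
  · rw [h1, zero_smul]
  · exact smul_nonpos_of_nonneg_of_nonpos (h0 k) h1

theorem lin_nonneg (x : Mor C) {γ : I → ℤ} (h0 : 0 ≤ γ)
    (h : ∀ k, γ k = 0 ∨ 0 ≤ x.lin (simpleRoot k)) : 0 ≤ x.lin γ := by
  rw [lin_eq_sum]
  refine Finset.sum_nonneg fun k _ => ?_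
  rcases h k with h1 | h1
  · rw [h1, zero_smul]
  · exact smul_nonneg (h0 k) h1

/-! ### Rank two: going around a rank two residue -/

/-- The positive roots at `a` in the span of `α_i` and `α_j`. -/
def plane (C : CartanScheme I A) (a : A) (i j : I) : Set (I → ℤ) :=
  {α | α ∈ C.roots a ∧ 0 ≤ α ∧ ∀ k, k ≠ i → k ≠ j → α k = 0}

/-- `x` changes only the coordinates `i` and `j`. -/
def FixesOff (x : Mor C) (i j : I) : Prop :=
  ∀ v k, k ≠ i → k ≠ j → x.lin v k = v k

theorem FixesOff.inv {x : Mor C} {i j : I} (h : FixesOff x i j) : FixesOff x.inv i j := by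
  intro v k hi hj
  rw [← h (x.inv.lin v) k hi hj, x.lin_inv]

theorem plane_finite (hC : C.IsFRS) (a : A) (i j : I) : (plane C a i j).Finite :=
  (hC.1 a).subset fun _ h => h.1

theorem ht_le_plane (hC : C.IsFRS) {x : Mor C} {i j : I} (h : FixesOff x i j) :
    ht x ≤ (plane C x.tgt i j).ncard := by
  refine Set.ncard_le_ncard_of_injOn (fun β => -x.lin β) ?_ ?_ (plane_finite hC _ _ _)
  · rintro β ⟨h1, h2, h3⟩
    refine ⟨neg_mem_roots (lin_mem_roots x h1), neg_nonneg.mpr h3, fun k hi hj => ?_⟩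
    have e1 := h2 k
    have e2 := h3 k
    have e3 := h β k hi hj
    simp only [Pi.zero_apply, Pi.neg_apply] at *
    omega
  · intro β _ γ _ hβ
    exact x.lin_injective (neg_injective hβ)

theorem ht_eq_plane (hC : C.IsFRS) {x : Mor C} {i j : I} (h : FixesOff x i j)
    (hi : x.lin (simpleRoot i) ≤ 0) (hj : x.lin (simpleRoot j) ≤ 0) :
    ht x = (plane C x.tgt i j).ncard := by
  refine le_antisymm (ht_le_plane hC h) ?_
  refine Set.ncard_le_ncard_of_injOn (fun β => -x.inv.lin β) ?_ ?_ (Dset_finite hC _)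
  · rintro α ⟨h1, h2, h3⟩
    have hr := inv_mem_roots x h1
    have hneg : x.inv.lin α ≤ 0 := by
      refine (root_sign hC hr).resolve_left fun h0 => root_not_nonpos h1 h2 ?_
      rw [← x.lin_inv α]
      refine lin_nonpos x h0 fun k => ?_
      by_cases hki : k = i
      · subst hki; exact Or.inr hi
      by_cases hkj : k = j
      · subst hkj; exact Or.inr hj
      · left
        rw [h.inv α k hki hkj, h3 k hki hkj]
    refine ⟨neg_mem_roots hr, neg_nonneg.mpr hneg, ?_⟩
    rw [map_neg, x.lin_inv]
    exact neg_nonpos.mpr h2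
  · intro β _ γ _ hβ
    exact x.inv.lin_injective (neg_injective hβ)

theorem ht_eq_zero {x : Mor C} {i j : I} (h : FixesOff x i j)
    (hi : 0 ≤ x.lin (simpleRoot i)) (hj : 0 ≤ x.lin (simpleRoot j)) : ht x = 0 := by
  have : Dset x = ∅ := by
    ext β
    simp only [Set.mem_empty_iff_false, iff_false]
    rintro ⟨h1, h2, h3⟩
    refine root_not_nonpos (lin_mem_roots x h1) (lin_nonneg x h2 fun k => ?_) h3
    by_cases hki : k = i
    · subst hki; exact Or.inr hi
    by_cases hkj : k = j
    · subst hkj; exact Or.inr hj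
    · left
      have e1 := h2 k
      have e2 := h3 k
      have e3 := h β k hki hkj
      simp only [Pi.zero_apply] at *
      omega
  rw [ht, this, Set.ncard_empty]

/-- The `k`-th letter of the alternating word `i, j, i, j, …`. -/
def letter (i j : I) (k : ℕ) : I := if Even k then i else j

theorem letter_cases (i j : I) (k : ℕ) :
    letter i j k = i ∧ letter i j (k + 1) = j ∨ letter i j k = j ∧ letter i j (k + 1) = i := by
  unfold letter
  by_cases h : Even k <;> simp [h, Nat.even_add_one]

/-- The products `x`, `x σ_i`, `x σ_i σ_j`, `x σ_i σ_j σ_i`, …. -/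
def path (x : Mor C) (i j : I) : ℕ → Mor C
  | 0 => x
  | k + 1 => rmul (path x i j k) (letter i j k)

theorem path_tgt (x : Mor C) (i j : I) (k : ℕ) : (path x i j k).tgt = x.tgt := by
  induction k with
  | zero => rfl
  | succ k ih => exact ih

theorem path_src (x : Mor C) (i j : I) (k : ℕ) :
    (path x i j k).src = (path (idMor C x.src) i j k).src := by
  induction k with
  | zero => rfl
  | succ k ih => simp [path, rmul_src, ih]

theorem path_lin (x : Mor C) (i j : I) (k : ℕ) (v : I → ℤ) :
    (path x i j k).lin v = x.lin ((path (idMor C x.src) i j k).lin v) := by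
  induction k generalizing v with
  | zero => simp [path, idMor_lin]
  | succ k ih => simp [path, rmul_lin, ih, path_src x i j k]

theorem path_src_two_mul (x : Mor C) (i j : I) (n : ℕ) :
    (path x i j (2 * n)).src = (fun a => C.ρ j (C.ρ i a))^[n] x.src := by
  induction n with
  | zero => rfl
  | succ n ih =>
    rw [Function.iterate_succ_apply', ← ih]
    simp [Nat.mul_succ, path, rmul_src, letter]

theorem path_fixesOff (b : A) (i j : I) (k : ℕ) : FixesOff (path (idMor C b) i j k) i j := by
  induction k with
  | zero =>
    intro v k _ _
    rw [path, idMor_lin]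
  | succ n ih =>
    intro v k hi hj
    have hk : k ≠ letter i j n := by
      unfold letter
      split_ifs <;> assumption
    rw [path, rmul_lin, ih _ k hi hj, sigma_apply_ne _ hk]

/-- The first half of the way around a rank two residue is ascending. -/
theorem path_up (hC : C.IsFRS) (b : A) (i j : I) (k : ℕ) (hk : k < (plane C b i j).ncard) :
    ht (path (idMor C b) i j k) = k ∧
      0 ≤ (path (idMor C b) i j k).lin (simpleRoot (letter i j k)) := by
  induction k with
  | zero => exact ⟨ht_idMor b, by rw [path, idMor_lin]; exact simpleRoot_nonneg _⟩
  | succ k ih =>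
    obtain ⟨h1, h2⟩ := ih (by omega)
    have hh : ht (path (idMor C b) i j (k + 1)) = k + 1 := by
      rw [path, ht_rmul_of_nonneg hC _ _ h2, h1]
    refine ⟨hh, (lin_simpleRoot_sign hC _ _).resolve_right fun h3 => ?_⟩
    have h4 : (path (idMor C b) i j (k + 1)).lin (simpleRoot (letter i j k)) ≤ 0 := by
      rw [path, rmul_lin_self]
      exact neg_nonpos.mpr h2
    have : ht (path (idMor C b) i j (k + 1)) = (plane C b i j).ncard := by
      have hp := path_tgt (idMor C b) i j (k + 1)
      rcases letter_cases i j k with ⟨e1, e2⟩ | ⟨e1, e2⟩ <;> rw [e1] at h4 <;> rw [e2] at h3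
      · rw [ht_eq_plane hC (path_fixesOff b i j (k + 1)) h4 h3, hp]; rfl
      · rw [ht_eq_plane hC (path_fixesOff b i j (k + 1)) h3 h4, hp]; rfl
    omega

theorem ht_path_le (hC : C.IsFRS) (b : A) (i j : I) (k : ℕ) (hk : k ≤ (plane C b i j).ncard) :
    ht (path (idMor C b) i j k) = k := by
  cases k with
  | zero => exact ht_idMor b
  | succ k =>
    obtain ⟨h1, h2⟩ := path_up hC b i j k hk
    rw [path, ht_rmul_of_nonneg hC _ _ h2, h1]

/-- The second half of the way around a rank two residue is descending. -/
theorem path_down (hC : C.IsFRS) (b : A) (i j : I) (r : ℕ) (hr : r < (plane C b i j).ncard) :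
    ht (path (idMor C b) i j ((plane C b i j).ncard + r)) + r = (plane C b i j).ncard ∧
      (path (idMor C b) i j ((plane C b i j).ncard + r)).lin
        (simpleRoot (letter i j ((plane C b i j).ncard + r))) ≤ 0 := by
  set m := (plane C b i j).ncard with hm
  induction r with
  | zero =>
    have hh := ht_path_le hC b i j m le_rfl
    refine ⟨hh, (lin_simpleRoot_sign hC _ _).resolve_left fun h3 => ?_⟩
    have h4 := ht_rmul_of_nonneg hC _ _ h3
    have h5 := ht_le_plane hC (path_fixesOff b i j (m + 1))
    have hp : (path (idMor C b) i j (m + 1)).tgt = b := path_tgt (idMor C b) i j (m + 1)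
    rw [hp] at h5
    simp only [path, Nat.add_zero] at h4 h5
    omega
  | succ r ih =>
    obtain ⟨h1, h2⟩ := ih (by omega)
    have hh := ht_rmul_of_nonpos hC _ _ h2
    change ht (path (idMor C b) i j (m + (r + 1))) + 1 = _ at hh
    refine ⟨by omega, (lin_simpleRoot_sign hC _ _).resolve_left fun h3 => ?_⟩
    have h4 : 0 ≤ (path (idMor C b) i j (m + (r + 1))).lin (simpleRoot (letter i j (m + r))) := by
      rw [← Nat.add_assoc, path, rmul_lin_self]
      exact neg_nonneg.mpr h2
    have : ht (path (idMor C b) i j (m + (r + 1))) = 0 := by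
      rcases letter_cases i j (m + r) with ⟨e1, e2⟩ | ⟨e1, e2⟩ <;> rw [e1] at h4 <;>
        rw [Nat.add_assoc] at e2 <;> rw [e2] at h3
      · exact ht_eq_zero (path_fixesOff b i j _) h4 h3
      · exact ht_eq_zero (path_fixesOff b i j _) h3 h4
    omega

/-- The `2 × 2` minor of `x` belonging to the indices `i` and `j`. -/
noncomputable def minor (x : Mor C) (i j : I) : ℤ :=
  x.lin (simpleRoot i) i * x.lin (simpleRoot j) j -
    x.lin (simpleRoot i) j * x.lin (simpleRoot j) i

theorem minor_rmul_left (x : Mor C) (i j : I) : minor (rmul x i) i j = -minor x i j := by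
  simp only [minor, rmul_lin, sigma_simpleRoot_self, sigma_simpleRoot x.src i j, map_neg,
    map_sub, map_smul, Pi.neg_apply, Pi.sub_apply, Pi.smul_apply, smul_eq_mul]
  ring

theorem minor_rmul_right (x : Mor C) (i j : I) : minor (rmul x j) i j = -minor x i j := by
  simp only [minor, rmul_lin, sigma_simpleRoot_self, sigma_simpleRoot x.src j i, map_neg,
    map_sub, map_smul, Pi.neg_apply, Pi.sub_apply, Pi.smul_apply, smul_eq_mul]
  ring

theorem minor_path (b : A) {i j : I} (hij : i ≠ j) (k : ℕ) :
    minor (path (idMor C b) i j k) i j = (-1) ^ k := by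
  induction k with
  | zero => simp [path, minor, idMor_lin, simpleRoot_self, simpleRoot_ne hij, simpleRoot_ne hij.symm]
  | succ k ih =>
    rw [path, pow_succ, ← ih, mul_neg_one]
    rcases letter_cases i j k with ⟨e1, -⟩ | ⟨e1, -⟩ <;> rw [e1]
    · exact minor_rmul_left _ _ _
    · exact minor_rmul_right _ _ _

theorem nonneg_of_ht_eq_zero (hC : C.IsFRS) {x : Mor C} (h : ht x = 0) (k : I) :
    0 ≤ x.lin (simpleRoot k) := by
  refine (lin_simpleRoot_sign hC x k).resolve_right fun h1 => ?_
  have := (Set.ncard_eq_zero (Dset_finite hC x)).mp h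
  have h2 : simpleRoot k ∈ Dset x := ⟨simpleRoot_mem _ _ _, simpleRoot_nonneg _, h1⟩
  rw [this] at h2
  exact h2

theorem inv_nonneg_of_ht_eq_zero (hC : C.IsFRS) {x : Mor C} (h : ht x = 0) (k : I) :
    0 ≤ x.inv.lin (simpleRoot k) := by
  have hr := inv_mem_roots x (simpleRoot_mem C x.tgt k)
  refine (root_sign hC hr).resolve_right fun h1 => ?_
  have h0 : 0 ≤ x.lin (-x.inv.lin (simpleRoot k)) :=
    lin_nonneg x (neg_nonneg.mpr h1) fun t => Or.inr (nonneg_of_ht_eq_zero hC h t)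
  rw [map_neg, x.lin_inv] at h0
  exact root_not_nonpos (simpleRoot_mem C x.tgt k) (simpleRoot_nonneg _) (neg_nonneg.mp h0)

theorem lin_off (x : Mor C) {i j : I} (hij : i ≠ j) {γ : I → ℤ}
    (hγ : ∀ k, k ≠ i → k ≠ j → γ k = 0) : x.lin γ =
      γ i • x.lin (simpleRoot i) + γ j • x.lin (simpleRoot j) := by
  rw [← map_smul, ← map_smul, ← map_add]
  congr 1
  ext k
  by_cases hi : k = i
  · subst hi; simp [simpleRoot_self, simpleRoot_ne hij]
  by_cases hj : k = j
  · subst hj; simp [simpleRoot_self, simpleRoot_ne hi]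
  · simp [simpleRoot_ne hi, simpleRoot_ne hj, hγ k hi hj]

/-- A morphism of height zero that changes only two coordinates and has determinant one acts
as the identity. -/
theorem lin_eq_self (hC : C.IsFRS) {x : Mor C} {i j : I} (hij : i ≠ j) (hx : FixesOff x i j)
    (hd : minor x i j = 1) (h0 : ht x = 0) (v : I → ℤ) : x.lin v = v := by
  have hpos := nonneg_of_ht_eq_zero hC h0
  have hinv := inv_nonneg_of_ht_eq_zero hC h0
  have off : ∀ t, (t = i ∨ t = j) → ∀ k, k ≠ i → k ≠ j → simpleRoot t k = 0 := by
    rintro t ht k hi hj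
    refine simpleRoot_ne ?_
    rcases ht with rfl | rfl <;> assumption
  have key : ∀ t, (t = i ∨ t = j) → x.inv.lin (simpleRoot t) i • x.lin (simpleRoot i) +
      x.inv.lin (simpleRoot t) j • x.lin (simpleRoot j) = simpleRoot t := by
    intro t ht
    rw [← lin_off x hij, x.lin_inv]
    intro k hi hj
    rw [hx.inv _ k hi hj, off t ht k hi hj]
  have k1 := congrFun (key i (Or.inl rfl)) i
  have k2 := congrFun (key i (Or.inl rfl)) j
  have k3 := congrFun (key j (Or.inr rfl)) i
  have k4 := congrFun (key j (Or.inr rfl)) j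
  simp only [Pi.add_apply, Pi.smul_apply, smul_eq_mul, simpleRoot_self, simpleRoot_ne hij,
    simpleRoot_ne hij.symm] at k1 k2 k3 k4
  have p1 := hpos i i
  have p2 := hpos i j
  have p3 := hpos j i
  have p4 := hpos j j
  have q1 := hinv i i
  have q2 := hinv i j
  have q3 := hinv j i
  have q4 := hinv j j
  unfold minor at hd
  simp only [Pi.zero_apply] at p1 p2 p3 p4 q1 q2 q3 q4
  -- A nonnegative integer matrix of determinant one with nonnegative inverse is the identity.
  have main : x.lin (simpleRoot i) i = 1 ∧ x.lin (simpleRoot i) j = 0 ∧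
      x.lin (simpleRoot j) i = 0 ∧ x.lin (simpleRoot j) j = 1 := by
    generalize x.lin (simpleRoot i) i = p at *
    generalize x.lin (simpleRoot i) j = q at *
    generalize x.lin (simpleRoot j) i = r at *
    generalize x.lin (simpleRoot j) j = s at *
    generalize x.inv.lin (simpleRoot i) i = p' at *
    generalize x.inv.lin (simpleRoot i) j = q' at *
    generalize x.inv.lin (simpleRoot j) i = r' at *
    generalize x.inv.lin (simpleRoot j) j = s' at *
    have a1 : q = -q' := by linear_combination (-q') * hd + p * k2 - q * k1
    have a2 : r = -r' := by linear_combination (-r') * hd + s * k3 - r * k4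
    have hq : q = 0 := by omega
    have hr : r = 0 := by omega
    subst hq hr
    have hps : p * s = 1 := by linarith
    have hp : p = 1 := Int.eq_one_of_mul_eq_one_right p1 hps
    subst hp
    exact ⟨rfl, rfl, rfl, by linarith⟩
  have hbase : ∀ t, (t = i ∨ t = j) → x.lin (simpleRoot t) = simpleRoot t := by
    obtain ⟨m1, m2, m3, m4⟩ := main
    intro t ht
    ext k
    by_cases hi : k = i
    · subst hi
      rcases ht with rfl | rfl
      · rw [m1, simpleRoot_self]
      · rw [m3, simpleRoot_ne hij]
    by_cases hj : k = j
    · subst hj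
      rcases ht with rfl | rfl
      · rw [m2, simpleRoot_ne hij.symm]
      · rw [m4, simpleRoot_self]
    · exact hx _ k hi hj
  have hall : ∀ k, x.lin (simpleRoot k) = simpleRoot k := by
    intro k
    by_cases hk : k = i ∨ k = j
    · exact hbase k hk
    push Not at hk
    -- `x⁻¹` sends `α_k` to `α_k - δ` if `x` sends it to `α_k + δ`; both are nonnegative.
    have hδ : x.lin (x.lin (simpleRoot k) - simpleRoot k) = x.lin (simpleRoot k) - simpleRoot k := by
      rw [lin_off x hij]
      · rw [hbase i (Or.inl rfl), hbase j (Or.inr rfl)]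
        ext t
        by_cases hi : t = i
        · subst hi; simp [simpleRoot_self, simpleRoot_ne hij]
        by_cases hj : t = j
        · subst hj; simp [simpleRoot_self, simpleRoot_ne hi]
        · have := hx (simpleRoot k) t hi hj
          simp [simpleRoot_ne hi, simpleRoot_ne hj, this]
      · intro t hi hj
        rw [Pi.sub_apply, hx _ t hi hj, sub_self]
    have hi2 : x.inv.lin (simpleRoot k) = simpleRoot k + simpleRoot k - x.lin (simpleRoot k) := by
      apply x.lin_injective
      rw [x.lin_inv, map_sub, map_add]
      rw [map_sub] at hδ
      ext t
      have := congrFun hδ t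
      simp only [Pi.sub_apply, Pi.add_apply] at this ⊢
      omega
    ext t
    by_cases ht : t = i ∨ t = j
    · have hkt : t ≠ k := by
        rintro rfl
        exact ht.elim hk.1 hk.2
      have e1 := hinv k t
      have e2 := hpos k t
      rw [hi2] at e1
      simp only [Pi.zero_apply, Pi.sub_apply, Pi.add_apply, simpleRoot_ne hkt] at e1 e2 ⊢
      omega
    · push Not at ht
      exact hx _ t ht.1 ht.2
  rw [lin_eq_sum]
  simp only [hall]
  ext t
  simp [simpleRoot, Pi.single_apply]

/-- By condition (R4), going around a rank two residue leads back to the start. -/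
theorem path_loop_idMor (hC : C.IsFRS) (b : A) {i j : I} (hij : i ≠ j) :
    path (idMor C b) i j (2 * (plane C b i j).ncard) = idMor C b := by
  set m := (plane C b i j).ncard with hm
  have hset : C.roots b ∩ {α | ∃ p q : ℕ, α = (p : ℤ) • Pi.single j 1 + (q : ℤ) • Pi.single i 1}
      = plane C b i j := by
    ext α
    constructor
    · rintro ⟨h1, p, q, rfl⟩
      refine ⟨h1, ?_, fun k hi hj => by simp [hi, hj]⟩
      exact add_nonneg (smul_nonneg (Int.natCast_nonneg p) (simpleRoot_nonneg j))
        (smul_nonneg (Int.natCast_nonneg q) (simpleRoot_nonneg i))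
    · rintro ⟨h1, h2, h3⟩
      refine ⟨h1, (α j).toNat, (α i).toNat, ?_⟩
      rw [Int.toNat_of_nonneg (h2 i), Int.toNat_of_nonneg (h2 j)]
      ext k
      by_cases hi : k = i
      · subst hi; simp [hij]
      by_cases hj : k = j
      · subst hj; simp [hi]
      · simp [hi, hj, h3 k hi hj]
  have hsrc := hC.2.2.2 b j i hij.symm
  rw [hset, ← hm] at hsrc
  have hht : ht (path (idMor C b) i j (2 * m)) = 0 := by
    rcases Nat.eq_zero_or_pos m with h0 | h0
    · rw [h0]; exact ht_idMor b
    · have h1 := path_down hC b i j (m - 1) (by omega)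
      rw [← hm] at h1
      have h2 := ht_rmul_of_nonpos hC _ _ h1.2
      have h3 : 2 * m = m + (m - 1) + 1 := by omega
      rw [h3, path]
      omega
  refine Mor.ext_lin ?_ (path_tgt _ _ _ _) fun v => ?_
  · rw [path_src_two_mul]; exact hsrc
  · rw [idMor_lin]
    refine lin_eq_self hC hij (path_fixesOff b i j _) ?_ hht v
    rw [minor_path b hij, pow_mul]
    simp

theorem path_loop (hC : C.IsFRS) (x : Mor C) {i j : I} (hij : i ≠ j) :
    path x i j (2 * (plane C x.src i j).ncard) = x := by
  refine Mor.ext_lin ?_ (path_tgt _ _ _ _) fun v => ?_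
  · rw [path_src, path_loop_idMor hC _ hij]; rfl
  · rw [path_lin, path_loop_idMor hC _ hij, idMor_lin]

/-! ### Length equals height -/

/-- One descending step in the weak order: `y = x σ_i` has one inversion less than `x`. -/
def Desc (x y : Mor C) : Prop := ∃ i, y = rmul x i ∧ x.lin (simpleRoot i) ≤ 0

theorem Desc.ht (hC : C.IsFRS) {x y : Mor C} (h : Desc x y) : ht y + 1 = ht x := by
  obtain ⟨i, rfl, hi⟩ := h
  exact ht_rmul_of_nonpos hC x i hi

theorem Desc.tgt {x y : Mor C} (h : Desc x y) : y.tgt = x.tgt := by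
  obtain ⟨i, rfl, -⟩ := h
  rfl

/-- Descending is locally confluent: two descents `x σ_i` and `x σ_j` meet at the element of
the residue of `x` opposite to `x`. -/
theorem local_confluence (hC : C.IsFRS) {x y z : Mor C} (hy : Desc x y) (hz : Desc x z) :
    ∃ t, Relation.ReflTransGen Desc y t ∧ Relation.ReflTransGen Desc z t := by
  obtain ⟨i, rfl, hi⟩ := hy
  obtain ⟨j, rfl, hj⟩ := hz
  by_cases hij : i = j
  · subst hij
    exact ⟨_, .refl, .refl⟩
  set m := (plane C x.src i j).ncard with hm
  have hm0 : 0 < m := by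
    rw [hm, Set.ncard_pos (plane_finite hC _ _ _)]
    exact ⟨simpleRoot i, simpleRoot_mem _ _ _, simpleRoot_nonneg _, fun k hk _ => simpleRoot_ne hk⟩
  have hletter : ∀ k n, simpleRoot (letter i j n) k = 0 ∨ k = i ∨ k = j := by
    intro k n
    by_cases hki : k = i
    · exact Or.inr (Or.inl hki)
    by_cases hkj : k = j
    · exact Or.inr (Or.inr hkj)
    left
    apply simpleRoot_ne
    unfold letter
    split_ifs <;> assumption
  have hzero : ∀ n k, (path (idMor C x.src) i j n).lin (simpleRoot (letter i j n)) k = 0 ∨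
      x.lin (simpleRoot k) ≤ 0 := by
    intro n k
    by_cases hki : k = i
    · subst hki; exact Or.inr hi
    by_cases hkj : k = j
    · subst hkj; exact Or.inr hj
    left
    rw [path_fixesOff _ _ _ _ _ k hki hkj]
    exact (hletter k n).resolve_right (not_or.mpr ⟨hki, hkj⟩)
  have hdown : ∀ k, k < m → Desc (path x i j k) (path x i j (k + 1)) := by
    intro k hk
    refine ⟨letter i j k, rfl, ?_⟩
    rw [path_lin]
    exact lin_nonpos x (path_up hC x.src i j k hk).2 (hzero k)
  have hup : ∀ r, r < m → Desc (path x i j (m + r + 1)) (path x i j (m + r)) := by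
    intro r hr
    refine ⟨letter i j (m + r), (rmul_rmul _ _).symm, ?_⟩
    rw [path, rmul_lin_self, path_lin, ← map_neg]
    refine lin_nonpos x (neg_nonneg.mpr (path_down hC x.src i j r hr).2) fun k => ?_
    rw [Pi.neg_apply, neg_eq_zero]
    exact hzero _ k
  refine ⟨path x i j m, ?_, ?_⟩
  · have : ∀ k, 1 ≤ k → k ≤ m → Relation.ReflTransGen Desc (path x i j 1) (path x i j k) := by
      intro k hk
      induction k, hk using Nat.le_induction with
      | base => intro _; exact .refl
      | succ k hk ih => exact fun hkm => (ih (by omega)).tail (hdown k (by omega))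
    exact this m hm0 le_rfl
  · have : ∀ r, r < m → Relation.ReflTransGen Desc (path x i j (m + r)) (path x i j m) := by
      intro r
      induction r with
      | zero => intro _; exact .refl
      | succ r ih => exact fun hr => (ih (by omega)).head (hup r (by omega))
    have hlast : rmul x j = path x i j (m + (m - 1)) := by
      have h1 := path_loop hC x hij
      have h2 : 2 * (plane C x.src i j).ncard = m + (m - 1) + 1 := by omega
      have h3 : letter i j (m + (m - 1)) = j := by
        have : ¬ Even (m + (m - 1)) := by
          rw [Nat.not_even_iff_odd]
          exact ⟨m - 1, by omega⟩
        simp [letter, this]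
      rw [h2, path, h3] at h1
      conv_lhs => rw [← h1]
      rw [rmul_rmul]
    rw [hlast]
    exact this (m - 1) (by omega)

/-- If `x` descends to an identity, then so does every descent of `x`: the inductive step of
Newman's lemma. -/
theorem desc_to_id (hC : C.IsFRS) : ∀ (n : ℕ) (x y : Mor C), ht x = n →
    Relation.ReflTransGen Desc x (idMor C x.tgt) → Desc x y →
    Relation.ReflTransGen Desc y (idMor C x.tgt) := by
  intro n
  induction n using Nat.strong_induction_on with
  | _ n ih =>
    intro x y hn hx hxy
    rcases Relation.ReflTransGen.cases_head hx with h | ⟨x', hxx', hx'⟩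
    · have h1 := hxy.ht hC
      rw [h, ht_idMor] at h1
      omega
    · obtain ⟨t, hyt, hxt⟩ := local_confluence hC hxy hxx'
      refine hyt.trans ?_
      have hht := hxx'.ht hC
      suffices h : ht t ≤ ht x' ∧ t.tgt = x.tgt ∧
          Relation.ReflTransGen Desc t (idMor C x.tgt) from h.2.2
      clear hyt
      induction hxt with
      | refl => exact ⟨le_rfl, hxx'.tgt, hx'⟩
      | tail _ hst ih' =>
        obtain ⟨h1, h2, h3⟩ := ih'
        have h4 := hst.ht hC
        refine ⟨by omega, hst.tgt.trans h2, ?_⟩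
        rw [← h2]
        exact ih _ (by omega) _ _ rfl (h2 ▸ h3) hst

theorem reaches_id (hC : C.IsFRS) (x : Mor C) :
    Relation.ReflTransGen Desc x (idMor C x.tgt) := by
  obtain ⟨l, hl⟩ := x.spec
  refine realizes_induction (P := fun x _ => Relation.ReflTransGen Desc x (idMor C x.tgt))
    (fun a => .refl) (fun x _ i h => ?_) l x hl
  rcases lin_simpleRoot_sign hC x i with h1 | h1
  · refine Relation.ReflTransGen.head ⟨i, (rmul_rmul x i).symm, ?_⟩ h
    rw [rmul_lin_self]
    exact neg_nonpos.mpr h1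
  · exact desc_to_id hC _ x _ rfl h ⟨i, rfl, h1⟩

theorem len_eq_ht (hC : C.IsFRS) (x : Mor C) : len x = ht x := by
  refine le_antisymm ?_ (ht_le_len hC x)
  have h := reaches_id hC x
  have he := len_idMor (C := C) x.tgt
  generalize idMor C x.tgt = e at h he
  induction h using Relation.ReflTransGen.head_induction_on with
  | refl => omega
  | @head z y h1 _ ih =>
    have h2 := h1.ht hC
    obtain ⟨i, hy, -⟩ := h1
    have h3 := len_rmul_le y i
    rw [hy, rmul_rmul, ← hy] at h3
    omega

/-! ### The weak order and inversion sets -/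

/-- Inclusion of inversion sets implies comparability in the weak order. -/
theorem weakLe_of_inversions (hC : C.IsFRS) {u w : Mor C} (htgt : u.tgt = w.tgt)
    (h : ∀ α ∈ C.roots u.tgt, 0 ≤ α → u.inv.lin α ≤ 0 → w.inv.lin α ≤ 0) : weakLe u w := by
  have hc : w.tgt = u.inv.src := by rw [u.inv_src, htgt]
  set v := u.inv.comp w with hv
  have hvs : v.src = w.src := comp_src hc
  have hvt : v.tgt = u.src := (comp_tgt hc).trans u.inv_tgt
  have hvl : ∀ x, v.lin x = u.inv.lin (w.lin x) := comp_lin hc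
  have huv : ∀ x, u.lin (v.lin x) = w.lin x := fun x => by rw [hvl, u.lin_inv]
  refine ⟨v, hvt, Mor.ext_lin ?_ ?_ fun x => ?_, ?_⟩
  · rw [comp_src hvt, hvs]
  · rw [comp_tgt hvt, htgt]
  · rw [comp_lin hvt, huv]
  rw [len_eq_ht hC, len_eq_ht hC, len_eq_ht hC]
  have hsub : Dset v ⊆ Dset w := by
    rintro β ⟨h1, h2, h3⟩
    rw [hvs] at h1
    refine ⟨h1, h2, (root_sign hC (lin_mem_roots w h1)).resolve_left fun h4 => ?_⟩
    have h5 := h (w.lin β) (htgt ▸ lin_mem_roots w h1) h4 (by rwa [← hvl])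
    rw [w.inv_lin] at h5
    exact root_not_nonpos h1 h2 h5
  have himg : Dset w \ Dset v = (fun γ => w.inv.lin (u.lin γ)) '' Dset u := by
    ext β
    constructor
    · rintro ⟨⟨h1, h2, h3⟩, h4⟩
      have hr : v.lin β ∈ C.roots u.src := hvt ▸ lin_mem_roots v (hvs.symm ▸ h1)
      refine ⟨v.lin β, ⟨hr, (root_sign hC hr).resolve_right fun h5 => ?_, ?_⟩, ?_⟩
      · exact h4 ⟨hvs.symm ▸ h1, h2, h5⟩
      · rwa [huv]
      · simp only [huv, w.inv_lin]
    · rintro ⟨γ, ⟨h1, h2, h3⟩, rfl⟩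
      have hr := lin_mem_roots u h1
      have h4 := h (-u.lin γ) (neg_mem_roots hr) (neg_nonneg.mpr h3) (by
        rw [map_neg, u.inv_lin]
        exact neg_nonpos.mpr h2)
      rw [map_neg] at h4
      refine ⟨⟨inv_mem_roots w (htgt ▸ hr), neg_nonpos.mp h4, ?_⟩, ?_⟩
      · rwa [w.lin_inv]
      · rintro ⟨-, -, h5⟩
        rw [hvl, w.lin_inv, u.inv_lin] at h5
        exact root_not_nonpos h1 h2 h5
  have hcard := Set.ncard_sdiff_add_ncard_of_subset hsub (Dset_finite hC w)
  have hinj : Function.Injective fun γ => w.inv.lin (u.lin γ) :=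
    w.inv.lin_injective.comp u.lin_injective
  rw [himg, Set.ncard_image_of_injective _ hinj] at hcard
  exact hcard.symm

/-- If `σ_i ≤_R w`, then `α_i` is an inversion of `w`. -/
theorem inv_simpleRoot_nonpos (hC : C.IsFRS) {w : Mor C} {i : I} (h : i ∈ IL w) :
    w.inv.lin (simpleRoot i) ≤ 0 := by
  obtain ⟨v, hv, hw, hlen⟩ := h
  have hr := inv_mem_roots w (simpleRoot_mem C w.tgt i)
  refine (root_sign hC hr).resolve_left fun h0 => ?_
  have hsrc : w.src = v.src := by rw [hw, comp_src hv]
  have hlin : ∀ x, v.lin x = C.sigma w.tgt i (w.lin x) := fun x => by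
    have : w.lin x = C.sigma w.tgt i (v.lin x) := by
      conv_lhs => rw [hw]
      rw [comp_lin hv, sgen_lin]
    rw [this, sigma_sigma]
  have hβ : w.inv.lin (simpleRoot i) ∈ Dset v := by
    refine ⟨hsrc ▸ hr, h0, ?_⟩
    rw [hlin, w.lin_inv, sigma_simpleRoot_self]
    exact neg_nonpos.mpr (simpleRoot_nonneg i)
  -- Otherwise `σ_i w` would have all the inversions of `w` and hence not be shorter.
  have hsub : Dset w ⊆ Dset v := by
    rintro γ ⟨h1, h2, h3⟩
    refine ⟨hsrc ▸ h1, h2, ?_⟩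
    have h4 := sigma_nonneg hC (i := i) (neg_mem_roots (lin_mem_roots w h1)) (neg_nonneg.mpr h3)
      (by
        intro h5
        rw [← h5, map_neg, w.inv_lin] at h0
        exact root_not_nonpos h1 h2 (neg_nonneg.mp h0))
    rw [← map_neg, ← hlin, map_neg] at h4
    exact neg_nonneg.mp h4
  have hle := Set.ncard_le_ncard hsub (Dset_finite hC v)
  have hs : 0 < len (sgen C w.tgt i) := by
    rw [len_eq_ht hC, ht, Set.ncard_pos (Dset_finite hC _)]
    refine ⟨simpleRoot i, simpleRoot_mem _ _ _, simpleRoot_nonneg _, ?_⟩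
    rw [sgen_lin, sigma_simpleRoot_self]
    exact neg_nonpos.mpr (simpleRoot_nonneg i)
  rw [len_eq_ht hC w, len_eq_ht hC v] at hlen
  unfold ht at hlen
  omega

/-- Elements of `W_J` change only the coordinates in `J`. -/
theorem parabolic_lin {J : Set I} {u : Mor C} (hu : InParabolic J u) (v : I → ℤ) {k : I}
    (hk : k ∉ J) : u.lin v k = v k := by
  obtain ⟨l, hl, hr⟩ := hu
  rw [Mor.lin_apply, ← hr.2]
  clear hr
  induction l with
  | nil => rfl
  | cons i l ih =>
    have hki : k ≠ i := fun h => hk (h ▸ hl i List.mem_cons_self)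
    rw [wordMap, Function.comp_apply, sigma_apply_ne _ hki]
    exact ih fun t ht => hl t (List.mem_cons_of_mem _ ht)

end CartanScheme

/-- For `w ∈ Hom(-,a)` and `J = I_L(w)` one has `w_J ≤_R w`. -/
theorem longest_of_IL_le (C : CartanScheme I A) (hC : C.IsFRS) (a : A)
    (w : Mor C) (hw : w.tgt = a) (m : Mor C) (hm : IsLongestPar a (IL w) m) :
    weakLe m w := by
  obtain ⟨hma, hmJ, -⟩ := hm
  refine weakLe_of_inversions hC (hma.trans hw.symm) fun α hα h0 h1 => ?_
  refine lin_nonpos _ h0 fun k => ?_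
  by_cases hk : k ∈ IL w
  · exact Or.inr (inv_simpleRoot_nonpos hC hk)
  · -- `m` preserves the coordinates outside `J`, so its inversions are supported in `J`.
    left
    have h2 := parabolic_lin hmJ (m.inv.lin α) hk
    rw [m.lin_inv] at h2
    exact le_antisymm (h2 ▸ h1 k) (h0 k)
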